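/- Let (S, Sigma, lambda) be an atomless probability space and G a sub-sigma-algebra of Sigma such that Sigma has no G-atom. Let P be a Sigma-measurable, closed-valued correspondence from S to R^m whose values are uniformly bounded in norm by a constant C, and let rho_1, ..., rho_J : S -> R be nonnegative lambda-integrable functions. Then for every Sigma-measurable selection v' of the pointwise convex hull co(P) there exists a Sigma-measurable selection v* of P such that E(v* rho_j | G) = E(v' rho_j | G) lambda-almost everywhere for each j = 1, ..., J (where v rho_j denotes the R^m-valued function s -> rho_j(s) v(s)). -/

import Mathlib

open MeasureTheory

/-- `D` is a `G`-atom for the measure `lam`. -/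
def IsGAtom {S : Type*} (mS : MeasurableSpace S) (G : MeasurableSpace S)
    (lam : @Measure S mS) (D : Set S) : Prop :=
  0 < lam D ∧ ∀ D₀ ⊆ D, MeasurableSet[mS] D₀ →
    ∃ D₁ : Set S, MeasurableSet[G] D₁ ∧ lam (symmDiff D₀ (D₁ ∩ D)) = 0

/-!
Measurable selection in Carathéodory's theorem writes `v' s` as a combination `∑ l, α s l • x s l`
of finitely many measurable selections `x · l` of `P`. The simplex-valued weights `w` for which
`∑ l, w l • x l` has the same weighted conditional expectations as `v'` form a nonempty, convex,
closed and bounded, hence weakly compact, subset of `L²`, so there is an extreme such `w`.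

Since there is no `G`-atom, every non-null set carries a nonzero bounded function `h` whose products
with finitely many given integrable functions all have zero conditional expectation. If two
coordinates of `w` were both at least `ε > 0` on a non-null set, moving the mass `± ε h` between
them would contradict extremality. Hence `w` is a.e. a vertex of the simplex, that is, it selects
one of the points `x s l`.
-/

section Selection

variable {S : Type*} [MeasurableSpace S]

theorem measurableSet_exists_eq_zero {X : Type*} [TopologicalSpace X] [CompactSpace X]
    [TopologicalSpace.SeparableSpace X] {φ : S → X → ℝ} (hmeas : ∀ x, Measurable fun s => φ s x)
    (hcont : ∀ s, Continuous (φ s)) (hnonneg : ∀ s x, 0 ≤ φ s x) :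
    MeasurableSet {s | ∃ x, φ s x = 0} := by
  rcases isEmpty_or_nonempty X with _ | _
  · simp
  obtain ⟨D, hDcount, hDdense⟩ := TopologicalSpace.exists_countable_dense X
  have := hDcount.to_subtype
  have exists_eq_zero_iff (s : S) : (∃ x, φ s x = 0) ↔ ⨅ x : D, φ s x = 0 := by
    rw [hDdense.ciInf' (hcont s)]
    constructor
    · rintro ⟨x, hx⟩
      have hbdd : BddBelow (Set.range (φ s)) := ⟨0, Set.forall_mem_range.mpr (hnonneg s)⟩
      exact le_antisymm (hx ▸ ciInf_le hbdd x) (le_ciInf (hnonneg s))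
    · intro hinf
      obtain ⟨x, hx⟩ := (isCompact_range (hcont s)).sInf_mem (Set.range_nonempty _)
      exact ⟨x, hx.trans hinf⟩
  simp only [exists_eq_zero_iff]
  exact (Measurable.iInf fun x : D => hmeas x) (measurableSet_singleton 0)

theorem exists_measurable_forall_eq_zero_of_isCompact {T : Set ℝ} (hT : IsCompact T)
    {φ : S → T → ℝ} (hmeas : ∀ x, Measurable fun s => φ s x) (hcont : ∀ s, Continuous (φ s))
    (hnonneg : ∀ s x, 0 ≤ φ s x) (hzero : ∀ s, ∃ x, φ s x = 0) :
    ∃ ξ : S → T, Measurable ξ ∧ ∀ s, φ s (ξ s) = 0 := by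
  have : CompactSpace T := isCompact_iff_compactSpace.mp hT
  have exists_least (s : S) : ∃ x, φ s x = 0 ∧ ∀ y, φ s y = 0 → x ≤ y := by
    have hcompact : IsCompact {x | φ s x = 0} :=
      (isClosed_eq (hcont s) continuous_const).isCompact
    exact hcompact.exists_isLeast (hzero s)
  choose ξ hξ hleast using exists_least
  refine ⟨ξ, ?_, hξ⟩
  refine Measurable.subtype_mk (f := fun s => (ξ s : ℝ)) (measurable_of_Iic fun t => ?_)
  -- `ξ s ≤ t` iff `φ s` and the distance to `Iic t` have a common zero.
  have hpre : (fun s => (ξ s : ℝ)) ⁻¹' Set.Iic t =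
      {s | ∃ x : T, φ s x + max ((x : ℝ) - t) 0 = 0} := by
    ext s
    simp only [Set.mem_preimage, Set.mem_Iic, Set.mem_ofPred_eq,
      add_eq_zero_iff_of_nonneg (hnonneg s _) (le_max_right _ _), max_eq_right_iff, sub_nonpos]
    exact ⟨fun h => ⟨ξ s, hξ s, h⟩, fun ⟨x, hx, hxt⟩ => le_trans (hleast s x hx) hxt⟩
  rw [hpre]
  exact measurableSet_exists_eq_zero (fun x => (hmeas x).add_const _)
    (fun s => (hcont s).add (by fun_prop)) fun s x => add_nonneg (hnonneg s x) (le_max_right _ _)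

theorem exists_continuous_surjective_cantorSet (X : Type*) [MetricSpace X] [CompactSpace X]
    [Nonempty X] : ∃ g : cantorSet → X, Continuous g ∧ Function.Surjective g := by
  obtain ⟨f, hf, hsurj⟩ := exists_nat_bool_continuous_surjective_of_compact X
  exact ⟨f ∘ cantorSetHomeomorphNatToBool, hf.comp cantorSetHomeomorphNatToBool.continuous,
    hsurj.comp cantorSetHomeomorphNatToBool.surjective⟩

theorem exists_measurable_forall_eq_zero {X : Type*} [MetricSpace X] [CompactSpace X]
    [MeasurableSpace X] [BorelSpace X] {φ : S → X → ℝ} (hmeas : ∀ x, Measurable fun s => φ s x)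
    (hcont : ∀ s, Continuous (φ s)) (hnonneg : ∀ s x, 0 ≤ φ s x) (hzero : ∀ s, ∃ x, φ s x = 0) :
    ∃ ξ : S → X, Measurable ξ ∧ ∀ s, φ s (ξ s) = 0 := by
  rcases isEmpty_or_nonempty S with _ | ⟨⟨s₀⟩⟩
  · exact ⟨isEmptyElim, measurable_of_empty _, isEmptyElim⟩
  have : Nonempty X := ⟨(hzero s₀).choose⟩
  obtain ⟨g, hg, hsurj⟩ := exists_continuous_surjective_cantorSet X
  obtain ⟨ξ, hξ, hφξ⟩ := exists_measurable_forall_eq_zero_of_isCompact isCompact_cantorSet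
    (fun x => hmeas (g x)) (fun s => (hcont s).comp hg) (fun s x => hnonneg s (g x))
    fun s => hsurj.exists.mp (hzero s)
  exact ⟨g ∘ ξ, hg.measurable.comp hξ, hφξ⟩

end Selection

section Caratheodory

theorem exists_mem_stdSimplex_sum_smul_eq_of_mem_convexHull {E : Type*} [AddCommGroup E]
    [Module ℝ E] [FiniteDimensional ℝ E] {A : Set E} {v : E} (hv : v ∈ convexHull ℝ A) :
    ∃ w ∈ stdSimplex ℝ (Fin (Module.finrank ℝ E + 1)),
      ∃ z : Fin (Module.finrank ℝ E + 1) → E, (∀ l, z l ∈ A) ∧ ∑ l, w l • z l = v := by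
  obtain ⟨ι, _, z, w, hzA, hindep, hw_pos, hw_sum, hwz⟩ := eq_pos_convex_span_of_mem_convexHull hv
  have hcard : Fintype.card ι ≤ Fintype.card (Fin (Module.finrank ℝ E + 1)) := by
    rw [Fintype.card_fin]
    exact hindep.card_le_finrank_succ.trans
      (Nat.add_le_add_right (Submodule.finrank_le _) 1)
  obtain ⟨e⟩ := Function.Embedding.nonempty_of_card_le hcard
  have : Nonempty ι := by
    by_contra hempty
    rw [not_nonempty_iff] at hempty
    simp at hw_sum
  have hw_off (l) (hl : l ∉ Set.range e) : Function.extend e w 0 l = 0 :=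
    Function.extend_apply' _ _ _ hl
  refine ⟨Function.extend e w 0, ⟨fun l => ?_, ?_⟩, z ∘ Function.invFun e,
    fun l => hzA (Set.mem_range_self _), ?_⟩
  · by_cases hl : l ∈ Set.range e
    · obtain ⟨i, rfl⟩ := hl
      rw [e.injective.extend_apply]
      exact (hw_pos i).le
    · exact (hw_off l hl).ge
  · rw [← hw_sum]
    exact (Fintype.sum_of_injective e e.injective _ _ hw_off
      fun i => (e.injective.extend_apply w 0 i).symm).symm
  · rw [← hwz]
    refine (Fintype.sum_of_injective e e.injective _ _ (fun l hl => ?_) fun i => ?_).symm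
    · rw [hw_off l hl, zero_smul]
    · rw [e.injective.extend_apply, Function.comp_apply, Function.leftInverse_invFun e.injective]

theorem measurable_infDist_of_measurableSet_inter_nonempty {S E : Type*} [MeasurableSpace S]
    [PseudoMetricSpace E] {P : S → Set E}
    (hP : ∀ U, IsOpen U → MeasurableSet {s | (P s ∩ U).Nonempty}) (hne : ∀ s, (P s).Nonempty)
    (y : E) : Measurable fun s => Metric.infDist y (P s) := by
  refine measurable_of_Iio fun r => ?_
  have hpre : (fun s => Metric.infDist y (P s)) ⁻¹' Set.Iio r =
      {s | (P s ∩ Metric.ball y r).Nonempty} := by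
    ext s
    simp only [Set.mem_preimage, Set.mem_Iio, Metric.infDist_lt_iff (hne s), Set.Nonempty,
      Set.mem_inter_iff, Metric.mem_ball', Set.mem_ofPred_eq]
  rw [hpre]
  exact hP _ Metric.isOpen_ball

variable {E : Type*} [NormedAddCommGroup E] [NormedSpace ℝ E] {κ : Type*} [Fintype κ]

/-- The defect of weights `p.1` and points `p.2` as a representation of `v` as a combination of
points of `A`: it turns the search for such a representation into that for a zero of a nonnegative
continuous function. -/
noncomputable def baryDefect (A : Set E) (v : E) (p : (κ → ℝ) × (κ → E)) : ℝ :=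
  ∑ l, Metric.infDist (p.2 l) A + ‖∑ l, p.1 l • p.2 l - v‖

theorem baryDefect_nonneg (A : Set E) (v : E) (p : (κ → ℝ) × (κ → E)) : 0 ≤ baryDefect A v p :=
  add_nonneg (Finset.sum_nonneg fun _ _ => Metric.infDist_nonneg) (norm_nonneg _)

theorem continuous_baryDefect (A : Set E) (v : E) :
    Continuous (baryDefect A v : (κ → ℝ) × (κ → E) → ℝ) := by
  have := Metric.continuous_infDist_pt A
  unfold baryDefect
  fun_prop

theorem baryDefect_eq_zero_iff {A : Set E} (hA : IsClosed A) (hne : A.Nonempty) {v : E}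
    {p : (κ → ℝ) × (κ → E)} :
    baryDefect A v p = 0 ↔ (∀ l, p.2 l ∈ A) ∧ ∑ l, p.1 l • p.2 l = v := by
  rw [baryDefect, add_eq_zero_iff_of_nonneg
    (Finset.sum_nonneg fun _ _ => Metric.infDist_nonneg) (norm_nonneg _),
    Finset.sum_eq_zero_iff_of_nonneg fun _ _ => Metric.infDist_nonneg, norm_eq_zero, sub_eq_zero]
  simp [hA.mem_iff_infDist_zero hne]

variable {S : Type*} [MeasurableSpace S] [FiniteDimensional ℝ E] [MeasurableSpace E] [BorelSpace E]

theorem exists_measurable_stdSimplex_sum_smul_eq {P : S → Set E}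
    (hP_meas : ∀ U, IsOpen U → MeasurableSet {s | (P s ∩ U).Nonempty})
    (hP_closed : ∀ s, IsClosed (P s)) {C : ℝ} (hP_bd : ∀ s, ∀ y ∈ P s, ‖y‖ ≤ C) {v : S → E}
    (hv : Measurable v) (hv_mem : ∀ s, v s ∈ convexHull ℝ (P s)) :
    ∃ (α : S → Fin (Module.finrank ℝ E + 1) → ℝ) (x : S → Fin (Module.finrank ℝ E + 1) → E),
      Measurable α ∧ Measurable x ∧ (∀ s, α s ∈ stdSimplex ℝ _) ∧ (∀ s l, x s l ∈ P s) ∧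
      ∀ s, ∑ l, α s l • x s l = v s := by
  have := FiniteDimensional.proper_real E
  have hne (s : S) : (P s).Nonempty := convexHull_nonempty_iff.mp ⟨_, hv_mem s⟩
  let L := Fin (Module.finrank ℝ E + 1)
  let K : Set ((L → ℝ) × (L → E)) :=
    stdSimplex ℝ L ×ˢ Set.univ.pi fun _ => Metric.closedBall 0 C
  have : CompactSpace K := isCompact_iff_compactSpace.mp <|
    (isCompact_stdSimplex ℝ L).prod (isCompact_univ_pi fun _ => isCompact_closedBall 0 C)
  have hzero (s : S) : ∃ p : K, baryDefect (P s) (v s) p.1 = 0 := by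
    obtain ⟨w, hw, z, hz, hwz⟩ := exists_mem_stdSimplex_sum_smul_eq_of_mem_convexHull (hv_mem s)
    have hzC (l : L) : z l ∈ Metric.closedBall 0 C := by simpa using hP_bd s _ (hz l)
    exact ⟨⟨(w, z), hw, fun l _ => hzC l⟩,
      (baryDefect_eq_zero_iff (hP_closed s) (hne s)).mpr ⟨hz, hwz⟩⟩
  obtain ⟨ξ, hξ, hξ_zero⟩ := exists_measurable_forall_eq_zero
    (φ := fun s (p : K) => baryDefect (P s) (v s) p.1)
    (fun p => (Finset.measurable_sum _ fun l _ =>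
      measurable_infDist_of_measurableSet_inter_nonempty hP_meas hne _).add (hv.const_sub _).norm)
    (fun s => (continuous_baryDefect _ _).comp continuous_subtype_val)
    (fun s p => baryDefect_nonneg _ _ _) hzero
  have hξ_spec (s : S) := (baryDefect_eq_zero_iff (hP_closed s) (hne s)).mp (hξ_zero s)
  exact ⟨fun s => (ξ s).1.1, fun s => (ξ s).1.2, measurable_fst.comp hξ.subtype_val,
    measurable_snd.comp hξ.subtype_val, fun s => (ξ s).2.1, fun s => (hξ_spec s).1,
    fun s => (hξ_spec s).2⟩

end Caratheodory

section ExtremePoints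

variable {H : Type*} [NormedAddCommGroup H] [InnerProductSpace ℝ H] [CompleteSpace H]

theorem surjective_inclusionInDoubleDualWeak :
    Function.Surjective (NormedSpace.inclusionInDoubleDualWeak ℝ H) := by
  intro Φ
  let Ψ : H →L[ℝ] ℝ := WeakDual.toStrongDual Φ ∘L innerSL ℝ
  refine ⟨toWeakSpace ℝ H ((InnerProductSpace.toDual ℝ H).symm Ψ), ?_⟩
  refine DFunLike.ext _ _ fun φ => ?_
  obtain ⟨y, rfl⟩ := (InnerProductSpace.toDual ℝ H).surjective φ
  calc inner ℝ y ((InnerProductSpace.toDual ℝ H).symm Ψ)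
      = inner ℝ ((InnerProductSpace.toDual ℝ H).symm Ψ) y := real_inner_comm _ _
    _ = Ψ y := InnerProductSpace.toDual_symm_apply

theorem isCompact_toWeakSpace_image {K : Set H} (hconv : Convex ℝ K) (hclosed : IsClosed K)
    (hbdd : Bornology.IsBounded K) : IsCompact (toWeakSpace ℝ H '' K) := by
  rw [← hclosed.closure_eq, hconv.toWeakSpace_closure (𝕜 := ℝ)]
  refine NormedSpace.isCompact_closure_of_isBounded ℝ H _ ?_ ?_
  · rwa [Set.preimage_image_eq _ (toWeakSpace ℝ H).injective]
  · rw [surjective_inclusionInDoubleDualWeak.range_eq]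
    exact Set.subset_univ _

theorem extremePoints_nonempty_of_isClosed_of_isBounded {K : Set H} (hconv : Convex ℝ K)
    (hclosed : IsClosed K) (hbdd : Bornology.IsBounded K) (hne : K.Nonempty) :
    (K.extremePoints ℝ).Nonempty := by
  have : LocallyConvexSpace ℝ (WeakSpace ℝ H) :=
    inferInstanceAs (LocallyConvexSpace ℝ (WeakBilin (topDualPairing ℝ H).flip))
  have : T2Space (WeakSpace ℝ H) :=
    (NormedSpace.isEmbedding_inclusionInDoubleDualWeak ℝ H).t2Space
  have := (isCompact_toWeakSpace_image hconv hclosed hbdd).extremePoints_nonempty (hne.image _)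
  rwa [← image_extremePoints, Set.image_nonempty] at this

end ExtremePoints

theorem eq_zero_of_add_mem_of_sub_mem_of_mem_extremePoints {E : Type*} [AddCommGroup E]
    [Module ℝ E] {K : Set E} {x y : E} (hx : x ∈ K.extremePoints ℝ) (hadd : x + y ∈ K)
    (hsub : x - y ∈ K) : y = 0 := by
  have hmid : x ∈ openSegment ℝ (x + y) (x - y) := by
    refine ⟨1 / 2, 1 / 2, by norm_num, by norm_num, by norm_num, ?_⟩
    module
  simpa using hx.2 hadd hsub hmid

section CondHull

variable {S : Type*} {G mS : MeasurableSpace S} {μ : Measure S} {D E Z : Set S}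

/-- The `G`-hull of `E`: up to null sets, the smallest `G`-measurable set containing `E`. It is
encoded as the set where the conditional probability of `E` given `G` is positive. -/
def condHull (G : MeasurableSpace S) {_ : MeasurableSpace S} (μ : Measure S) (E : Set S) : Set S :=
  {s | 0 < (μ[E.indicator 1|G] : S → ℝ) s}

theorem measurableSet_condHull : MeasurableSet[G] (condHull G μ E) :=
  measurableSet_lt (@measurable_const _ _ _ G _) stronglyMeasurable_condExp.measurable

theorem setIntegral_condExp_indicator_one [IsFiniteMeasure μ] (hG : G ≤ mS)
    (hE : MeasurableSet E) (hZ : MeasurableSet[G] Z) :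
    ∫ s in Z, (μ[E.indicator 1|G] : S → ℝ) s ∂μ = μ.real (E ∩ Z) := by
  have hint : Integrable (E.indicator (1 : S → ℝ)) μ := (integrable_const 1).indicator hE
  rw [setIntegral_condExp hG hint hZ, integral_indicator_one hE, measureReal_restrict_apply hE]

theorem measure_condHull_inter_eq_zero_iff [IsFiniteMeasure μ] (hG : G ≤ mS)
    (hE : MeasurableSet E) (hZ : MeasurableSet[G] Z) :
    μ (condHull G μ E ∩ Z) = 0 ↔ μ (E ∩ Z) = 0 := by
  have hnonneg : 0 ≤ᵐ[μ] (μ[E.indicator 1|G] : S → ℝ) :=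
    condExp_nonneg (ae_of_all _ (Set.indicator_nonneg fun _ _ => zero_le_one))
  rw [← measureReal_eq_zero_iff (s := E ∩ Z), ← setIntegral_condExp_indicator_one hG hE hZ,
    setIntegral_eq_zero_iff_of_nonneg_ae (ae_restrict_of_ae hnonneg)
      integrable_condExp.integrableOn,
    Filter.EventuallyEq, ae_restrict_iff' (hG _ hZ), measure_eq_zero_iff_ae_notMem]
  refine Filter.eventually_congr (hnonneg.mono fun s hs => ?_)
  simp only [condHull, Set.mem_inter_iff, Set.mem_ofPred_eq, Pi.zero_apply] at hs ⊢
  rw [hs.lt_iff_ne', not_and', not_ne_iff]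

theorem measure_diff_condHull [IsFiniteMeasure μ] (hG : G ≤ mS) (hE : MeasurableSet E) :
    μ (E \ condHull G μ E) = 0 := by
  rw [Set.sdiff_eq,
    ← measure_condHull_inter_eq_zero_iff hG hE measurableSet_condHull.compl,
    Set.inter_compl_self, measure_empty]

theorem exists_subset_measure_condHull_inter_condHull_diff_ne_zero [IsFiniteMeasure μ]
    (hG : G ≤ mS) (hD : MeasurableSet D) (hD0 : μ D ≠ 0) (hatom : ¬ IsGAtom mS G μ D) :
    ∃ D₀ ⊆ D, MeasurableSet D₀ ∧ μ (condHull G μ D₀ ∩ condHull G μ (D \ D₀)) ≠ 0 := by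
  simp only [IsGAtom, pos_iff_ne_zero.mpr hD0, true_and, not_forall, not_exists, not_and] at hatom
  obtain ⟨D₀, hD₀D, hD₀, hsep⟩ := hatom
  refine ⟨D₀, hD₀D, hD₀, fun hnull => hsep (condHull G μ D₀) measurableSet_condHull ?_⟩
  refine measure_mono_null (fun s hs => ?_) <| measure_union_null
    (measure_union_null (measure_diff_condHull hG hD₀) (measure_diff_condHull hG (hD.diff hD₀)))
    hnull
  simp only [Set.mem_symmDiff, Set.mem_inter_iff, Set.mem_union, Set.mem_sdiff] at hs ⊢
  have := @hD₀D s
  tauto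

end CondHull

section CondAnnihilator

variable {S : Type*} {G mS : MeasurableSpace S} {μ : Measure S} {F : Set (S → ℝ)} {D D₁ D₂ : Set S}
  {h h₁ h₂ c f : S → ℝ}

/-- `h` is a function with values in `[-1, 1]`, supported in `D` and conditionally orthogonal,
given `G`, to every function of `F`. Such functions are the perturbations that leave the
conditional moments against `F` unchanged. -/
structure IsCondAnnihilator (G : MeasurableSpace S) {_ : MeasurableSpace S} (μ : Measure S)
    (F : Set (S → ℝ)) (D : Set S) (h : S → ℝ) : Prop where
  measurable : Measurable h
  abs_le_one : ∀ s, |h s| ≤ 1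
  support_subset : Function.support h ⊆ D
  condExp_mul_eq_zero : ∀ f ∈ F, μ[h * f|G] =ᵐ[μ] 0

namespace IsCondAnnihilator

theorem mono_set (hh : IsCondAnnihilator G μ F D₁ h) (hD : D₁ ⊆ D₂) :
    IsCondAnnihilator G μ F D₂ h :=
  ⟨hh.measurable, hh.abs_le_one, hh.support_subset.trans hD, hh.condExp_mul_eq_zero⟩

theorem integrable_mul (hh : IsCondAnnihilator G μ F D h) (hf : Integrable f μ) :
    Integrable (h * f) μ :=
  hf.bdd_mul hh.measurable.aestronglyMeasurable (ae_of_all _ hh.abs_le_one)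

theorem insert_of_condExp_mul_eq_zero (hh : IsCondAnnihilator G μ F D h)
    (hf : μ[h * f | G] =ᵐ[μ] 0) :
    IsCondAnnihilator G μ (insert f F) D h :=
  ⟨hh.measurable, hh.abs_le_one, hh.support_subset,
    Set.forall_mem_insert.mpr ⟨hf, hh.condExp_mul_eq_zero⟩⟩

theorem condExp_mul_mul [IsFiniteMeasure μ] (hG : G ≤ mS) (hh : IsCondAnnihilator G μ F D h)
    (hc : Measurable[G] c) (hc1 : ∀ s, |c s| ≤ 1) (hf : Integrable f μ) :
    μ[c * h * f|G] =ᵐ[μ] c * μ[h * f|G] := by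
  rw [mul_assoc]
  exact condExp_stronglyMeasurable_mul_of_bound hG hc.stronglyMeasurable (hh.integrable_mul hf) 1
    (ae_of_all _ hc1)

theorem mul_left [IsFiniteMeasure μ] (hG : G ≤ mS) (hF : ∀ f ∈ F, Integrable f μ)
    (hh : IsCondAnnihilator G μ F D h) (hc : Measurable[G] c) (hc1 : ∀ s, |c s| ≤ 1) :
    IsCondAnnihilator G μ F D (c * h) where
  measurable := (hc.mono hG le_rfl).mul hh.measurable
  abs_le_one s := by
    rw [Pi.mul_apply, abs_mul]
    exact mul_le_one₀ (hc1 s) (abs_nonneg _) (hh.abs_le_one s)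
  support_subset := (Function.support_mul_subset_right _ _).trans hh.support_subset
  condExp_mul_eq_zero f hf := by
    filter_upwards [hh.condExp_mul_mul hG hc hc1 (hF f hf), hh.condExp_mul_eq_zero f hf]
      with s hmul hzero
    rw [hmul, Pi.mul_apply, hzero, Pi.zero_apply, mul_zero]

theorem condExp_sub_mul (hh₁ : IsCondAnnihilator G μ F D₁ h₁) (hh₂ : IsCondAnnihilator G μ F D₂ h₂)
    (hf : Integrable f μ) : μ[(h₁ - h₂) * f|G] =ᵐ[μ] μ[h₁ * f|G] - μ[h₂ * f|G] := by
  rw [sub_mul]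
  exact condExp_sub (hh₁.integrable_mul hf) (hh₂.integrable_mul hf) G

theorem sub (hF : ∀ f ∈ F, Integrable f μ) (hh₁ : IsCondAnnihilator G μ F D₁ h₁)
    (hh₂ : IsCondAnnihilator G μ F D₂ h₂) (hdisj : Disjoint D₁ D₂) :
    IsCondAnnihilator G μ F (D₁ ∪ D₂) (h₁ - h₂) where
  measurable := hh₁.measurable.sub hh₂.measurable
  abs_le_one s := by
    have hzero : h₁ s = 0 ∨ h₂ s = 0 := by
      by_contra! hne
      exact hdisj.le_bot ⟨hh₁.support_subset hne.1, hh₂.support_subset hne.2⟩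
    rcases hzero with hs | hs
    · simpa [hs] using hh₂.abs_le_one s
    · simpa [hs] using hh₁.abs_le_one s
  support_subset := (Function.support_sub _ _).trans
    (Set.union_subset_union hh₁.support_subset hh₂.support_subset)
  condExp_mul_eq_zero f hf := by
    filter_upwards [hh₁.condExp_sub_mul hh₂ (hF f hf), hh₁.condExp_mul_eq_zero f hf,
      hh₂.condExp_mul_eq_zero f hf] with s hsub hs₁ hs₂
    rw [hsub, Pi.sub_apply, hs₁, hs₂, Pi.zero_apply, sub_zero]

-- The combination `a₂ h₁ - a₁ h₂` with `aᵢ = E(hᵢ f | G)` kills `f`; `w` makes it bounded.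
theorem exists_insert_sub [IsFiniteMeasure μ] (hG : G ≤ mS) (hF : ∀ f ∈ F, Integrable f μ)
    (hf : Integrable f μ) (hh₁ : IsCondAnnihilator G μ F D₁ h₁)
    (hh₂ : IsCondAnnihilator G μ F D₂ h₂) (hdisj : Disjoint D₁ D₂) :
    ∃ w : S → ℝ, (∀ s, 0 < w s) ∧ IsCondAnnihilator G μ (insert f F) (D₁ ∪ D₂)
      (w * μ[h₂ * f|G] * h₁ - w * μ[h₁ * f|G] * h₂) := by
  set a₁ := μ[h₁ * f|G] with ha₁
  set a₂ := μ[h₂ * f|G] with ha₂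
  have ha₁m : Measurable[G] a₁ := stronglyMeasurable_condExp.measurable
  have ha₂m : Measurable[G] a₂ := stronglyMeasurable_condExp.measurable
  let w : S → ℝ := fun s => (1 + |a₁ s| + |a₂ s|)⁻¹
  have hw_pos (s : S) : 0 < w s := by positivity
  have hwm : Measurable[G] w :=
    (((continuous_abs.measurable.comp ha₁m).const_add 1).add
      (continuous_abs.measurable.comp ha₂m)).inv
  have hwa₁ (s : S) : |(w * a₁) s| ≤ 1 := by
    rw [Pi.mul_apply, abs_mul, abs_of_pos (hw_pos s), inv_mul_le_one₀ (by positivity)]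
    linarith [abs_nonneg (a₂ s)]
  have hwa₂ (s : S) : |(w * a₂) s| ≤ 1 := by
    rw [Pi.mul_apply, abs_mul, abs_of_pos (hw_pos s), inv_mul_le_one₀ (by positivity)]
    linarith [abs_nonneg (a₁ s)]
  have hk₁ := hh₁.mul_left hG hF (hwm.mul ha₂m) hwa₂
  have hk₂ := hh₂.mul_left hG hF (hwm.mul ha₁m) hwa₁
  refine ⟨w, hw_pos, (hk₁.sub hF hk₂ hdisj).insert_of_condExp_mul_eq_zero ?_⟩
  filter_upwards [hk₁.condExp_sub_mul hk₂ hf, hh₁.condExp_mul_mul hG (hwm.mul ha₂m) hwa₂ hf,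
    hh₂.condExp_mul_mul hG (hwm.mul ha₁m) hwa₁ hf] with s hsub hs₁ hs₂
  rw [hsub, Pi.sub_apply, hs₁, hs₂, ← ha₁, ← ha₂]
  simp only [Pi.mul_apply, Pi.zero_apply]
  ring

theorem condExp_mul_eq_zero_of_notMem (hh : IsCondAnnihilator G μ F D h) (hf : Integrable f μ)
    (hD : MeasurableSet[G] D) : ∀ᵐ s ∂μ, s ∉ D → (μ[h * f|G]) s = 0 := by
  have hind : D.indicator (h * f) = h * f :=
    Set.indicator_eq_self.mpr ((Function.support_mul_subset_left _ _).trans hh.support_subset)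
  have := condExp_indicator (m := G) (hh.integrable_mul hf) hD
  rw [hind] at this
  filter_upwards [this] with s hs hsD
  rw [hs, Set.indicator_of_notMem hsD]

theorem exists_insert [IsFiniteMeasure μ] (hG : G ≤ mS) (hF : ∀ f ∈ F, Integrable f μ)
    (hf : Integrable f μ) (hh₁ : IsCondAnnihilator G μ F D₁ h₁)
    (hh₂ : IsCondAnnihilator G μ F D₂ h₂) (hdisj : Disjoint D₁ D₂)
    (hhull : D₂ ⊆ condHull G μ (Function.support h₁)) (hne : μ (Function.support h₂) ≠ 0) :
    ∃ h, IsCondAnnihilator G μ (insert f F) (D₁ ∪ D₂) h ∧ μ (Function.support h) ≠ 0 := by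
  obtain ⟨w, hw, hcomb⟩ := hh₁.exists_insert_sub hG hF hf hh₂ hdisj
  set a₁ := μ[h₁ * f|G]
  set a₂ := μ[h₂ * f|G]
  by_cases hnull : μ (Function.support (w * a₂ * h₁ - w * a₁ * h₂)) = 0
  swap; · exact ⟨_, hcomb, hnull⟩
  have hZ : MeasurableSet[G] (Function.support a₂) :=
    measurableSet_support stronglyMeasurable_condExp.measurable
  have hsupp : μ (Function.support h₁ ∩ Function.support a₂) = 0 := by
    refine measure_mono_null (fun s hs => ?_) hnull
    have hs₂ : h₂ s = 0 := Function.notMem_support.mp fun hs₂ =>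
      hdisj.le_bot ⟨hh₁.support_subset hs.1, hh₂.support_subset hs₂⟩
    simpa [hs₂, (hw s).ne', and_comm] using hs
  have hhull_null : μ (condHull G μ (Function.support h₁) ∩ Function.support a₂) = 0 :=
    (measure_condHull_inter_eq_zero_iff hG (measurableSet_support hh₁.measurable) hZ).mpr hsupp
  refine ⟨h₂, (hh₂.mono_set Set.subset_union_right).insert_of_condExp_mul_eq_zero ?_, hne⟩
  filter_upwards [(hh₂.mono_set hhull).condExp_mul_eq_zero_of_notMem hf measurableSet_condHull,
    measure_eq_zero_iff_ae_notMem.mp hhull_null] with s hoff hon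
  by_contra hs
  exact hon ⟨by_contra fun hmem => hs (hoff hmem), hs⟩

end IsCondAnnihilator

theorem isCondAnnihilator_empty_indicator_one (hD : MeasurableSet D) :
    IsCondAnnihilator G μ ∅ D (D.indicator 1) where
  measurable := measurable_one.indicator hD
  abs_le_one s := by by_cases hs : s ∈ D <;> simp [hs]
  support_subset := Set.support_indicator_subset
  condExp_mul_eq_zero := by simp

theorem exists_isCondAnnihilator [IsFiniteMeasure μ] (hG : G ≤ mS)
    (hatom : ∀ D, MeasurableSet D → ¬ IsGAtom mS G μ D) (hFfin : F.Finite)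
    (hF : ∀ f ∈ F, Integrable f μ) (hD : MeasurableSet D) (hD0 : μ D ≠ 0) :
    ∃ h, IsCondAnnihilator G μ F D h ∧ μ (Function.support h) ≠ 0 := by
  induction F, hFfin using Set.Finite.induction_on generalizing D with
  | empty =>
    exact ⟨_, isCondAnnihilator_empty_indicator_one hD,
      by simpa [Set.support_indicator] using hD0⟩
  | @insert f F _ _ ih =>
    obtain ⟨hf, hF⟩ := Set.forall_mem_insert.mp hF
    obtain ⟨A, hAD, hA, hhulls⟩ :=
      exists_subset_measure_condHull_inter_condHull_diff_ne_zero hG hD hD0 (hatom D hD)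
    set B := condHull G μ (D \ A) with hB
    have hBm : MeasurableSet[G] B := measurableSet_condHull
    have hAB : μ (A ∩ B) ≠ 0 := by
      rwa [Ne, ← measure_condHull_inter_eq_zero_iff hG hA hBm]
    obtain ⟨h₁, hh₁, hne₁⟩ := ih hF (hA.inter (hG _ hBm)) hAB
    set H := condHull G μ (Function.support h₁)
    have hHm : MeasurableSet[G] H := measurableSet_condHull
    have hDH : μ ((D \ A) ∩ H) ≠ 0 := by
      rw [Ne, ← measure_condHull_inter_eq_zero_iff hG (hD.diff hA) hHm, ← hB, Set.inter_comm,
        measure_condHull_inter_eq_zero_iff hG (measurableSet_support hh₁.measurable) hBm]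
      rwa [Set.inter_eq_left.mpr (hh₁.support_subset.trans Set.inter_subset_right)]
    obtain ⟨h₂, hh₂, hne₂⟩ := ih hF ((hD.diff hA).inter (hG _ hHm)) hDH
    have hdisj : Disjoint (A ∩ B) ((D \ A) ∩ H) :=
      Set.disjoint_sdiff_right.mono Set.inter_subset_left Set.inter_subset_left
    obtain ⟨h, hh, hne⟩ := hh₁.exists_insert hG hF hf hh₂ hdisj Set.inter_subset_right hne₂
    refine ⟨h, hh.mono_set (Set.union_subset ?_ ?_), hne⟩
    · exact Set.inter_subset_left.trans hAD
    · exact Set.inter_subset_left.trans Set.sdiff_subset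

end CondAnnihilator

section StdSimplex

variable {L : Type*} [Fintype L] {x : L → ℝ}

theorem norm_toLp_le_one_of_mem_stdSimplex (hx : x ∈ stdSimplex ℝ L) :
    ‖WithLp.toLp 2 x‖ ≤ 1 := by
  rw [EuclideanSpace.norm_eq, Real.sqrt_le_one, ← hx.2]
  refine Finset.sum_le_sum fun l _ => ?_
  have := hx.1 l
  have := (mem_Icc_of_mem_stdSimplex hx l).2
  rw [Real.norm_eq_abs, sq_abs]
  nlinarith

variable [DecidableEq L]

theorem add_smul_single_sub_single_mem_stdSimplex (hx : x ∈ stdSimplex ℝ L) {t : ℝ} {l l' : L}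
    (hl : |t| ≤ x l) (hl' : |t| ≤ x l') :
    x + t • (Pi.single l 1 - Pi.single l' 1) ∈ stdSimplex ℝ L := by
  refine ⟨fun k => ?_, ?_⟩
  · have := hx.1 k
    have := abs_le.mp hl
    have := abs_le.mp hl'
    rcases eq_or_ne k l with rfl | hk <;> rcases eq_or_ne k l' with rfl | hk' <;>
      (simp [*]; try linarith)
  · simp [Finset.sum_add_distrib, ← Finset.mul_sum, hx.2]

theorem exists_eq_single_of_mem_stdSimplex (hx : x ∈ stdSimplex ℝ L)
    (hzero : ∀ l l', l ≠ l' → x l = 0 ∨ x l' = 0) : ∃ l, x = Pi.single l 1 := by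
  obtain ⟨l, -, hl⟩ := Finset.exists_ne_zero_of_sum_ne_zero (hx.2.trans_ne one_ne_zero)
  have hoff (k : L) (hk : k ≠ l) : x k = 0 := (hzero k l hk).resolve_right hl
  have hone : x l = 1 := by
    rw [← hx.2, Finset.sum_eq_single l (fun k _ hk => hoff k hk) (by simp)]
  refine ⟨l, funext fun k => ?_⟩
  rcases eq_or_ne k l with rfl | hk
  · simp [hone]
  · simp [hk, hoff k hk]

end StdSimplex

theorem exists_measurable_apply_single (L : Type*) [Finite L] [DecidableEq L] [Nonempty L]
    [MeasurableSpace L] [DiscreteMeasurableSpace L] :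
    ∃ τ : EuclideanSpace ℝ L → L, Measurable τ ∧ ∀ l, τ (EuclideanSpace.single l 1) = l := by
  have := Fintype.ofFinite L
  have hinj : Function.Injective fun l : L => (EuclideanSpace.single l 1 : EuclideanSpace ℝ L) := by
    intro l l' hl
    by_contra hne
    simpa [hne] using congrFun (congrArg WithLp.ofLp hl) l
  obtain ⟨τ, hτ, hcomp⟩ := (measurable_of_countable _).measurableEmbedding hinj
    |>.exists_measurable_extend measurable_id fun _ => inferInstance
  exact ⟨τ, hτ, congrFun hcomp⟩

section CondMomentWeights

open EuclideanSpace (single)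

variable {S L ι : Type*} {G mS : MeasurableSpace S} {μ : Measure S} [Fintype L]
  {f : L → ι → S → ℝ} {g : ι → S → ℝ}

/-- The simplex-valued weights `w` for which every mixture `∑ l, w l * f l i` has the same
conditional expectation given `G` as `g i`, as a subset of the Hilbert space `L²`. -/
def condMomentWeights (G : MeasurableSpace S) {_ : MeasurableSpace S} (μ : Measure S)
    (f : L → ι → S → ℝ) (g : ι → S → ℝ) : Set (Lp (EuclideanSpace ℝ L) 2 μ) :=
  {w | (∀ᵐ s ∂μ, (w s).ofLp ∈ stdSimplex ℝ L) ∧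
    ∀ i, μ[fun s => ∑ l, w s l * f l i s|G] =ᵐ[μ] μ[g i|G]}

theorem integrable_sum_mul_of_mem_stdSimplex {w : S → EuclideanSpace ℝ L} {f : L → S → ℝ}
    (hw : AEStronglyMeasurable w μ) (hw_mem : ∀ᵐ s ∂μ, (w s).ofLp ∈ stdSimplex ℝ L)
    (hf : ∀ l, Integrable (f l) μ) : Integrable (fun s => ∑ l, w s l * f l s) μ := by
  refine integrable_finsetSum _ fun l _ => (hf l).bdd_mul (c := 1) ?_ ?_
  · exact (by fun_prop : Continuous fun x : EuclideanSpace ℝ L => x l).comp_aestronglyMeasurable hw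
  · filter_upwards [hw_mem] with s hs
    rw [Real.norm_of_nonneg (hs.1 l)]
    exact (mem_Icc_of_mem_stdSimplex hs l).2

theorem convex_condMomentWeights (hf : ∀ l i, Integrable (f l i) μ) :
    Convex ℝ (condMomentWeights G μ f g) := by
  rintro w ⟨hw, hwg⟩ w' ⟨hw', hwg'⟩ a b ha hb hab
  have hcoe : ∀ᵐ s ∂μ, (a • w + b • w') s = a • w s + b • w' s := by
    filter_upwards [Lp.coeFn_add (a • w) (b • w'), Lp.coeFn_smul a w, Lp.coeFn_smul b w']
      with s hadd hsmul hsmul'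
    rw [hadd, Pi.add_apply, hsmul, hsmul', Pi.smul_apply, Pi.smul_apply]
  refine ⟨?_, fun i => ?_⟩
  · filter_upwards [hcoe, hw, hw'] with s hs hws hws'
    rw [hs]
    exact convex_stdSimplex ℝ L hws hws' ha hb hab
  · have hint := integrable_sum_mul_of_mem_stdSimplex (Lp.aestronglyMeasurable w) hw (hf · i)
    have hint' := integrable_sum_mul_of_mem_stdSimplex (Lp.aestronglyMeasurable w') hw' (hf · i)
    have hmix : (fun s => ∑ l, (a • w + b • w') s l * f l i s) =ᵐ[μ]
        a • (fun s => ∑ l, w s l * f l i s) + b • fun s => ∑ l, w' s l * f l i s := by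
      filter_upwards [hcoe] with s hs
      simp only [hs]
      simp [add_mul, Finset.sum_add_distrib, Finset.mul_sum, mul_assoc]
    filter_upwards [condExp_congr_ae (m := G) hmix,
      condExp_add (hint.smul a) (hint'.smul b) G, condExp_smul a (fun s => ∑ l, w s l * f l i s) G,
      condExp_smul b (fun s => ∑ l, w' s l * f l i s) G, hwg i, hwg' i]
      with s hs hadd hsmul hsmul' hgs hgs'
    rw [hs, hadd, Pi.add_apply, hsmul, hsmul', Pi.smul_apply, Pi.smul_apply, hgs, hgs', ← add_smul,
      hab, one_smul]

theorem isBounded_condMomentWeights [IsFiniteMeasure μ] :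
    Bornology.IsBounded (condMomentWeights G μ f g) := by
  refine isBounded_iff_forall_norm_le.mpr ⟨_, fun w hw => Lp.norm_le_of_ae_bound zero_le_one ?_⟩
  exact hw.1.mono fun s hs => norm_toLp_le_one_of_mem_stdSimplex hs

theorem isClosed_condMomentWeights (hf : ∀ l i, Integrable (f l i) μ)
    (hg : ∀ i, Integrable (g i) μ) : IsClosed (condMomentWeights G μ f g) := by
  refine IsSeqClosed.isClosed fun w w₀ hw hlim => ?_
  obtain ⟨n, -, hae⟩ := (tendstoInMeasure_of_tendsto_Lp hlim).exists_seq_tendsto_ae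
  have hcoord : ∀ᵐ s ∂μ, ∀ l,
      Filter.Tendsto (fun k => w (n k) s l) Filter.atTop (nhds (w₀ s l)) := by
    filter_upwards [hae] with s hs l
    exact ((by fun_prop : Continuous fun x : EuclideanSpace ℝ L => x l).tendsto _).comp hs
  have hmem : ∀ᵐ s ∂μ, ∀ k, (w (n k) s).ofLp ∈ stdSimplex ℝ L :=
    ae_all_iff.mpr fun k => (hw (n k)).1
  refine ⟨?_, fun i => ?_⟩
  · filter_upwards [hcoord, hmem] with s hs hmem_s
    exact (isClosed_stdSimplex ℝ L).mem_of_tendsto (tendsto_pi_nhds.mpr hs)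
      (Filter.Eventually.of_forall hmem_s)
  · refine tendsto_condExp_unique (fun k s => ∑ l, w (n k) s l * f l i s) (fun _ => g i) _ _
      (fun k => integrable_sum_mul_of_mem_stdSimplex (Lp.aestronglyMeasurable _) (hw (n k)).1
        (hf · i)) (fun _ => hg i) ?_ (ae_of_all _ fun s => tendsto_const_nhds)
      (fun s => ∑ l, |f l i s|) (integrable_finsetSum _ fun l _ => (hf l i).abs)
      (fun s => |g i s|) (hg i).abs (fun k => ?_) (fun _ => ae_of_all _ fun s => le_rfl)
      fun k => (hw (n k)).2 i
    · filter_upwards [hcoord] with s hs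
      exact tendsto_finsetSum _ fun l _ => (hs l).mul_const _
    · filter_upwards [hmem] with s hs
      refine (norm_sum_le _ _).trans (Finset.sum_le_sum fun l _ => ?_)
      rw [norm_mul, Real.norm_of_nonneg ((hs k).1 l), Real.norm_eq_abs]
      exact mul_le_of_le_one_left (abs_nonneg _) (mem_Icc_of_mem_stdSimplex (hs k) l).2

theorem condMomentWeights_nonempty [IsFiniteMeasure μ] {α : S → L → ℝ} (hα : Measurable α)
    (hα_mem : ∀ s, α s ∈ stdSimplex ℝ L) :
    (condMomentWeights G μ f fun i s => ∑ l, α s l * f l i s).Nonempty := by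
  have hmem : MemLp (fun s => WithLp.toLp 2 (α s)) 2 μ := by
    refine MemLp.of_bound (by fun_prop : Measurable _).aestronglyMeasurable 1 ?_
    exact ae_of_all _ fun s => norm_toLp_le_one_of_mem_stdSimplex (hα_mem s)
  refine ⟨hmem.toLp _, ?_, fun i => condExp_congr_ae ?_⟩
  · filter_upwards [hmem.coeFn_toLp] with s hs
    rw [hs]
    exact hα_mem s
  · filter_upwards [hmem.coeFn_toLp] with s hs
    simp only [hs]

variable {F : Set (S → ℝ)} {D : Set S} {h : S → ℝ} {l l' : L}

theorem IsCondAnnihilator.memLp_smul_single_sub_single [IsFiniteMeasure μ] [DecidableEq L]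
    (hh : IsCondAnnihilator G μ F D h) (l l' : L) :
    MemLp (fun s => h s • (single l 1 - single l' 1 : EuclideanSpace ℝ L)) 2 μ := by
  refine MemLp.of_bound (hh.measurable.smul_const _).aestronglyMeasurable
    ‖(single l 1 - single l' 1 : EuclideanSpace ℝ L)‖ (ae_of_all _ fun s => ?_)
  rw [norm_smul]
  exact mul_le_of_le_one_left (norm_nonneg _) (hh.abs_le_one s)

theorem IsCondAnnihilator.add_smul_mem_condMomentWeights [IsFiniteMeasure μ] [DecidableEq L]
    (hf : ∀ l i, Integrable (f l i) μ) {w : Lp (EuclideanSpace ℝ L) 2 μ}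
    (hw : w ∈ condMomentWeights G μ f g) {t : ℝ}
    (hh : IsCondAnnihilator G μ (Set.range fun i => f l i - f l' i)
      {s | |t| ≤ w s l ∧ |t| ≤ w s l'} h) :
    w + t • (hh.memLp_smul_single_sub_single l l').toLp _ ∈ condMomentWeights G μ f g := by
  set u := (hh.memLp_smul_single_sub_single l l').toLp _ with hu
  have hcoe : ∀ᵐ s ∂μ, (w + t • u) s = w s + (t * h s) • (single l 1 - single l' 1) := by
    filter_upwards [Lp.coeFn_add w (t • u), Lp.coeFn_smul t u,
      (hh.memLp_smul_single_sub_single l l').coeFn_toLp] with s hadd hsmul hu_s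
    rw [hadd, Pi.add_apply, hsmul, Pi.smul_apply, hu, hu_s, smul_smul]
  refine ⟨?_, fun i => ?_⟩
  · filter_upwards [hcoe, hw.1] with s hs hws
    have hbound : |t * h s| ≤ w s l ∧ |t * h s| ≤ w s l' := by
      by_cases hs0 : h s = 0
      · simpa [hs0] using ⟨hws.1 l, hws.1 l'⟩
      · have hle : |t * h s| ≤ |t| := by
          rw [abs_mul]
          exact mul_le_of_le_one_right (abs_nonneg _) (hh.abs_le_one s)
        have hmem := hh.support_subset hs0
        exact ⟨hle.trans hmem.1, hle.trans hmem.2⟩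
    rw [hs]
    exact add_smul_single_sub_single_mem_stdSimplex hws hbound.1 hbound.2
  · have hint := integrable_sum_mul_of_mem_stdSimplex (Lp.aestronglyMeasurable w) hw.1 (hf · i)
    have hint' : Integrable (h * (f l i - f l' i)) μ :=
      hh.integrable_mul ((hf l i).sub (hf l' i))
    have hmix : (fun s => ∑ k, (w + t • u) s k * f k i s) =ᵐ[μ]
        (fun s => ∑ k, w s k * f k i s) + t • (h * (f l i - f l' i)) := by
      filter_upwards [hcoe] with s hs
      simp only [hs]
      simp [add_mul, sub_mul, mul_sub, Finset.sum_add_distrib, mul_assoc]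
    filter_upwards [condExp_congr_ae (m := G) hmix, condExp_add hint (hint'.smul t) G,
      condExp_smul t (h * (f l i - f l' i)) G, hw.2 i, hh.condExp_mul_eq_zero _ ⟨i, rfl⟩]
      with s hs hadd hsmul hws hzero
    rw [hs, hadd, Pi.add_apply, hsmul, Pi.smul_apply, hws, hzero, Pi.zero_apply, smul_zero,
      add_zero]

theorem IsCondAnnihilator.toLp_smul_single_sub_single_ne_zero [IsFiniteMeasure μ] [DecidableEq L]
    (hh : IsCondAnnihilator G μ F D h) (hne : μ (Function.support h) ≠ 0) (hll' : l ≠ l') :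
    (hh.memLp_smul_single_sub_single l l').toLp _ ≠ 0 := by
  have hv : (single l 1 - single l' 1 : EuclideanSpace ℝ L) ≠ 0 := fun hv => by
    simpa [hll'] using congrFun (congrArg WithLp.ofLp hv) l
  intro hzero
  refine hne (measure_eq_zero_iff_ae_notMem.mpr ?_)
  filter_upwards [(hh.memLp_smul_single_sub_single l l').coeFn_toLp,
    Lp.coeFn_zero (EuclideanSpace ℝ L) 2 μ] with s hs hs0
  rw [hzero, hs0, Pi.zero_apply, eq_comm, smul_eq_zero_iff_left hv] at hs
  exact Function.notMem_support.mpr hs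

theorem measure_le_and_le_eq_zero_of_mem_extremePoints [IsFiniteMeasure μ] [Finite ι] (hG : G ≤ mS)
    (hatom : ∀ D, MeasurableSet D → ¬ IsGAtom mS G μ D) (hf : ∀ l i, Integrable (f l i) μ)
    {w : Lp (EuclideanSpace ℝ L) 2 μ}
    (hw : w ∈ (condMomentWeights G μ f g).extremePoints ℝ) (hll' : l ≠ l') {ε : ℝ} (hε : 0 < ε) :
    μ {s | ε ≤ w s l ∧ ε ≤ w s l'} = 0 := by
  classical
  by_contra hne
  have hwm (k : L) : Measurable fun s => w s k :=
    (by fun_prop : Measurable fun x : EuclideanSpace ℝ L => x k).comp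
      (Lp.stronglyMeasurable w).measurable
  have hD : MeasurableSet {s | ε ≤ w s l ∧ ε ≤ w s l'} :=
    (measurableSet_le measurable_const (hwm l)).inter (measurableSet_le measurable_const (hwm l'))
  obtain ⟨h, hh, hh_ne⟩ := exists_isCondAnnihilator hG hatom
    (Set.finite_range fun i => f l i - f l' i)
    (Set.forall_mem_range.mpr fun i => (hf l i).sub (hf l' i)) hD hne
  have hpos := (hh.mono_set (by simp [abs_of_pos hε])).add_smul_mem_condMomentWeights
    (t := ε) hf hw.1
  have hneg := (hh.mono_set (by simp [abs_of_pos hε])).add_smul_mem_condMomentWeights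
    (t := -ε) hf hw.1
  rw [neg_smul, ← sub_eq_add_neg] at hneg
  exact smul_ne_zero hε.ne' (hh.toLp_smul_single_sub_single_ne_zero hh_ne hll')
    (eq_zero_of_add_mem_of_sub_mem_of_mem_extremePoints hw hpos hneg)

theorem ae_eq_zero_or_eq_zero_of_mem_extremePoints [IsFiniteMeasure μ] [Finite ι] (hG : G ≤ mS)
    (hatom : ∀ D, MeasurableSet D → ¬ IsGAtom mS G μ D) (hf : ∀ l i, Integrable (f l i) μ)
    {w : Lp (EuclideanSpace ℝ L) 2 μ}
    (hw : w ∈ (condMomentWeights G μ f g).extremePoints ℝ) (hll' : l ≠ l') :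
    ∀ᵐ s ∂μ, w s l = 0 ∨ w s l' = 0 := by
  have hsmall : ∀ᵐ s ∂μ, ∀ n : ℕ, ¬ (1 / ((n : ℝ) + 1) ≤ w s l ∧ 1 / ((n : ℝ) + 1) ≤ w s l') :=
    ae_all_iff.mpr fun n => measure_eq_zero_iff_ae_notMem.mp <|
      measure_le_and_le_eq_zero_of_mem_extremePoints hG hatom hf hw hll' Nat.one_div_pos_of_nat
  filter_upwards [hsmall, hw.1.1] with s hs hmem
  by_contra! hne
  have hpos : 0 < min (w s l) (w s l') :=
    lt_min ((hmem.1 l).lt_of_ne' hne.1) ((hmem.1 l').lt_of_ne' hne.2)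
  obtain ⟨n, hn⟩ := exists_nat_one_div_lt hpos
  exact hs n (le_min_iff.mp hn.le)

theorem ae_mem_range_single_of_mem_extremePoints [IsFiniteMeasure μ] [Finite ι] [DecidableEq L]
    (hG : G ≤ mS) (hatom : ∀ D, MeasurableSet D → ¬ IsGAtom mS G μ D)
    (hf : ∀ l i, Integrable (f l i) μ)
    {w : Lp (EuclideanSpace ℝ L) 2 μ}
    (hw : w ∈ (condMomentWeights G μ f g).extremePoints ℝ) :
    ∀ᵐ s ∂μ, ∃ l, w s = single l 1 := by
  have hzero : ∀ᵐ s ∂μ, ∀ l l', l ≠ l' → w s l = 0 ∨ w s l' = 0 := by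
    simp only [ae_all_iff]
    exact fun l l' => ae_eq_zero_or_eq_zero_of_mem_extremePoints hG hatom hf hw
  filter_upwards [hw.1.1, hzero] with s hmem hs
  obtain ⟨l, hl⟩ := exists_eq_single_of_mem_stdSimplex hmem hs
  exact ⟨l, WithLp.ofLp_injective 2 hl⟩

theorem exists_measurable_condExp_eq_condExp_sum_mul [IsFiniteMeasure μ] [Finite ι] (hG : G ≤ mS)
    (hatom : ∀ D, MeasurableSet D → ¬ IsGAtom mS G μ D) [Nonempty L] [MeasurableSpace L]
    [DiscreteMeasurableSpace L] (hf : ∀ l i, Integrable (f l i) μ) {α : S → L → ℝ}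
    (hα : Measurable α) (hα_mem : ∀ s, α s ∈ stdSimplex ℝ L) :
    ∃ σ : S → L, Measurable σ ∧
      ∀ i, μ[fun s => f (σ s) i s|G] =ᵐ[μ] μ[fun s => ∑ l, α s l * f l i s|G] := by
  classical
  have hg (i : ι) : Integrable (fun s => ∑ l, α s l * f l i s) μ :=
    integrable_sum_mul_of_mem_stdSimplex (w := fun s => WithLp.toLp 2 (α s))
      (by fun_prop : Measurable _).aestronglyMeasurable (ae_of_all _ hα_mem) (hf · i)
  obtain ⟨w, hw⟩ := extremePoints_nonempty_of_isClosed_of_isBounded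
    (convex_condMomentWeights (G := G) hf) (isClosed_condMomentWeights hf hg)
    isBounded_condMomentWeights (condMomentWeights_nonempty hα hα_mem)
  obtain ⟨τ, hτ, hτ_single⟩ := exists_measurable_apply_single L
  refine ⟨fun s => τ (w s), hτ.comp (Lp.stronglyMeasurable w).measurable, fun i => ?_⟩
  refine (condExp_congr_ae ?_).trans (hw.1.2 i)
  filter_upwards [ae_mem_range_single_of_mem_extremePoints hG hatom hf hw] with s ⟨l, hl⟩
  simp [hl, hτ_single]

end CondMomentWeights

section VectorValued

variable {S E : Type*} {G mS : MeasurableSpace S} {μ : Measure S} [NormedAddCommGroup E]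
  [NormedSpace ℝ E] [FiniteDimensional ℝ E]

theorem condExp_ae_eq_of_forall_repr {κ : Type*} [Finite κ] (b : Module.Basis κ ℝ E) {f g : S → E}
    (hf : Integrable f μ) (hg : Integrable g μ)
    (hfg : ∀ k, μ[fun s => b.repr (f s) k | G] =ᵐ[μ] μ[fun s => b.repr (g s) k | G]) :
    μ[f|G] =ᵐ[μ] μ[g|G] := by
  have := FiniteDimensional.complete ℝ E
  have hcoord (k : κ) : ∀ᵐ s ∂μ, b.repr ((μ[f|G]) s) k = b.repr ((μ[g|G]) s) k := by
    let T := LinearMap.toContinuousLinearMap (b.coord k)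
    exact (T.comp_condExp_comm hf).trans ((hfg k).trans (T.comp_condExp_comm hg).symm)
  filter_upwards [ae_all_iff.mpr hcoord] with s hs
  exact b.ext_elem hs

variable [MeasurableSpace E] [BorelSpace E]

theorem integrable_smul_of_mem_convexHull {P : S → Set E} {C : ℝ}
    (hP_bd : ∀ s, ∀ y ∈ P s, ‖y‖ ≤ C) {u : S → E} (hu : Measurable u)
    (hu_mem : ∀ s, u s ∈ convexHull ℝ (P s)) {r : S → ℝ} (hr : Integrable r μ) :
    Integrable (fun s => r s • u s) μ := by
  refine hr.smul_bdd C hu.aestronglyMeasurable (ae_of_all _ fun s => ?_)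
  have hball : convexHull ℝ (P s) ⊆ Metric.closedBall 0 C :=
    convexHull_min (fun y hy => by simpa using hP_bd s y hy) (convex_closedBall 0 C)
  simpa using hball (hu_mem s)

theorem exists_selection_condexp_smul_eq_general {ι : Type*} [Finite ι] [IsFiniteMeasure μ]
    (hG : G ≤ mS) (hatom : ∀ D, MeasurableSet D → ¬ IsGAtom mS G μ D) {P : S → Set E}
    (hP_meas : ∀ U, IsOpen U → MeasurableSet {s | (P s ∩ U).Nonempty})
    (hP_closed : ∀ s, IsClosed (P s)) {C : ℝ} (hP_bd : ∀ s, ∀ y ∈ P s, ‖y‖ ≤ C)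
    {rho : ι → S → ℝ} (hrho : ∀ j, Integrable (rho j) μ) {v' : S → E} (hv' : Measurable v')
    (hv'_mem : ∀ s, v' s ∈ convexHull ℝ (P s)) :
    ∃ v : S → E, Measurable v ∧ (∀ s, v s ∈ P s) ∧
      ∀ j, μ[fun s => rho j s • v s|G] =ᵐ[μ] μ[fun s => rho j s • v' s|G] := by
  have hint {u : S → E} (hu : Measurable u) (hu_mem : ∀ s, u s ∈ convexHull ℝ (P s)) (j : ι) :
      Integrable (fun s => rho j s • u s) μ :=
    integrable_smul_of_mem_convexHull hP_bd hu hu_mem (hrho j)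
  obtain ⟨α, x, hα, hx, hα_mem, hx_mem, hsum⟩ :=
    exists_measurable_stdSimplex_sum_smul_eq hP_meas hP_closed hP_bd hv' hv'_mem
  have hxl (l) : Measurable fun s => x s l := (measurable_pi_apply l).comp hx
  have hx_hull (s l) : x s l ∈ convexHull ℝ (P s) := subset_convexHull ℝ _ (hx_mem s l)
  let b := Module.finBasis ℝ E
  have hcoord (l) (i : ι × _) : Integrable (fun s => b.repr (rho i.1 s • x s l) i.2) μ :=
    (LinearMap.toContinuousLinearMap (b.coord i.2)).integrable_comp
      (hint (hxl l) (hx_hull · l) i.1)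
  obtain ⟨σ, hσ, hσ_eq⟩ := exists_measurable_condExp_eq_condExp_sum_mul hG hatom hcoord hα hα_mem
  have hv : Measurable fun s => x s (σ s) :=
    (measurable_from_prod_countable_right (f := fun p => x p.2 p.1) hxl).comp
      (hσ.prodMk measurable_id)
  refine ⟨fun s => x s (σ s), hv, fun s => hx_mem s (σ s), fun j => ?_⟩
  refine condExp_ae_eq_of_forall_repr b (hint hv (fun s => hx_hull s (σ s)) j)
    (hint hv' hv'_mem j) fun k => (hσ_eq (j, k)).trans (Filter.EventuallyEq.of_eq ?_)
  congr! 2 with s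
  simp [← hsum, Finset.mul_sum, mul_left_comm]

end VectorValued

/-- On an atomless probability space with no `G`-atom, any measurable selection `v'` of the
convex hull of a uniformly bounded, measurable, closed-valued correspondence `P` can be
matched by a measurable selection `v*` of `P` with
`E(v* ρⱼ | G) = E(v' ρⱼ | G)` a.e. for each `j = 1, …, J`. -/
theorem exists_selection_condexp_smul_eq
    {m : ℕ} {S : Type*} [mS : MeasurableSpace S]
    (lam : Measure S) [IsProbabilityMeasure lam]
    -- `lam` is atomless
    (h_atomless : ∀ D : Set S, MeasurableSet[mS] D → 0 < lam D →
      ∃ D₀ ⊆ D, MeasurableSet[mS] D₀ ∧ 0 < lam D₀ ∧ lam D₀ < lam D)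
    (G : MeasurableSpace S) (hG : G ≤ mS)
    (h_no_atom : ∀ D : Set S, MeasurableSet[mS] D → ¬ IsGAtom mS G lam D)
    -- `P` is a measurable, closed-valued correspondence, uniformly bounded by `C`
    (P : S → Set (EuclideanSpace ℝ (Fin m)))
    (hP_meas : ∀ U : Set (EuclideanSpace ℝ (Fin m)), IsOpen U →
      MeasurableSet[mS] {s | (P s ∩ U).Nonempty})
    (hP_closed : ∀ s, IsClosed (P s))
    (C : ℝ) (hP_bd : ∀ s, ∀ y ∈ P s, ‖y‖ ≤ C)
    -- nonnegative integrable weights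
    (J : ℕ) (rho : Fin J → S → ℝ)
    (hrho_nonneg : ∀ j s, 0 ≤ rho j s)
    (hrho_int : ∀ j, Integrable (rho j) lam)
    -- `v'` is a measurable selection of the pointwise convex hull of `P`
    (v' : S → EuclideanSpace ℝ (Fin m)) (hv'_meas : Measurable[mS] v')
    (hv'_sel : ∀ s, v' s ∈ convexHull ℝ (P s)) :
    ∃ v : S → EuclideanSpace ℝ (Fin m), Measurable[mS] v ∧ (∀ s, v s ∈ P s) ∧
      ∀ j, lam[fun s => rho j s • v s|G] =ᵐ[lam] lam[fun s => rho j s • v' s|G] :=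
  exists_selection_condexp_smul_eq_general hG h_no_atom hP_meas hP_closed hP_bd hrho_int hv'_meas
    hv'_sel
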